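/- Let n ≥ 2, let D be a digital n-object, and let e be an (n−2)-cell. Then D has an (n−2)-gap over e (i.e. e is an (n−2)-hub of D) if and only if there exist voxels v1, v2 ∈ D such that: (1) e < v1 and e < v2; (2) v1 is (n−2)-adjacent but not (n−1)-adjacent to v2 (i.e. v1 ∈ A_{n−2}(v2) \ A_{n−1}(v2)); and (3) no voxel of D is (n−1)-adjacent to both v1 and v2 (i.e. A_{n−1}(v1) ∩ A_{n−1}(v2) ∩ D = ∅). -/

import Mathlib

/-!
The voxels of the block of an `(n - k)`-cell `e` form a `k`-dimensional discrete cube: they agree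
with `e` in its odd coordinates and differ from it by `±1` in its `k` even ones. In terms of the
Hamming distance on this cube, `(n - 1)`-adjacency means distance `1`, and two voxels meet exactly
in `e` iff they are antipodal, i.e. at distance `k`. The cube is then the Hamming interval between
the two, so for `k = 2` its other voxels are precisely the common `(n - 1)`-neighbours of the
antipodal pair, and `D` contains none of these iff it meets the block in the pair alone.
-/

namespace DigitalGeometry

/-- The dimension of a cell of the cubical grid (doubled coordinates):
the number of odd coordinates. -/
def cdim {n : ℕ} (c : Fin n → ℤ) : ℕ :=
  (Finset.univ.filter fun j => Odd (c j)).card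

/-- The bounding relation `e < f` between cells of the grid. -/
def Bounds {n : ℕ} (e f : Fin n → ℤ) : Prop :=
  cdim e < cdim f ∧ ∀ j, e j = f j ∨ (Odd (f j) ∧ |e j - f j| = 1)

/-- A voxel is an `n`-cell: all coordinates odd. -/
def IsVoxel {n : ℕ} (v : Fin n → ℤ) : Prop := ∀ j, Odd (v j)

/-- The `i`-block centered on an `i`-cell `e`: all voxels bounded by `e`. -/
def Block {n : ℕ} (e : Fin n → ℤ) : Set (Fin n → ℤ) :=
  {v | IsVoxel v ∧ Bounds e v}

/-- `Cells D i` : the `i`-cells of the object `D` (for `i < n` those bounding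
some voxel of `D`; for `i = n` it is `D` itself). -/
def Cells {n : ℕ} (D : Set (Fin n → ℤ)) (i : ℕ) : Set (Fin n → ℤ) :=
  {e | cdim e = i ∧ (e ∈ D ∨ ∃ v ∈ D, Bounds e v)}

/-- `c_i(D)` : the number of `i`-cells of `D`. -/
noncomputable def cCount {n : ℕ} (D : Set (Fin n → ℤ)) (i : ℕ) : ℕ := (Cells D i).ncard

/-- The free `i`-cells of `D`: those whose `i`-block is not contained in `D`. -/
def FreeCells {n : ℕ} (D : Set (Fin n → ℤ)) (i : ℕ) : Set (Fin n → ℤ) :=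
  {e | e ∈ Cells D i ∧ ¬ Block e ⊆ D}

/-- `c*_i(D)` : the number of free `i`-cells of `D`. -/
noncomputable def cStar {n : ℕ} (D : Set (Fin n → ℤ)) (i : ℕ) : ℕ := (FreeCells D i).ncard

/-- The non-free `i`-cells of `D`. -/
def NonFreeCells {n : ℕ} (D : Set (Fin n → ℤ)) (i : ℕ) : Set (Fin n → ℤ) :=
  {e | e ∈ Cells D i ∧ Block e ⊆ D}

/-- `c'_i(D)` : the number of non-free `i`-cells of `D`. -/
noncomputable def cPrime {n : ℕ} (D : Set (Fin n → ℤ)) (i : ℕ) : ℕ := (NonFreeCells D i).ncard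

/-- `InterCell v1 v2 e` : the intersection of the voxels `v1`, `v2`
(as subsets of `ℝ^n`) equals the cell `e`. -/
def InterCell {n : ℕ} (v1 v2 e : Fin n → ℤ) : Prop :=
  ∀ j, (v1 j = v2 j ∧ e j = v1 j) ∨
       (e j + 1 = max (v1 j) (v2 j) ∧ e j - 1 = min (v1 j) (v2 j))

/-- `e` is an `(n-2)`-hub of `D`, i.e. `D` has an `(n-2)`-gap over `e`. -/
def IsHub {n : ℕ} (D : Set (Fin n → ℤ)) (e : Fin n → ℤ) : Prop :=
  cdim e = n - 2 ∧ ∃ v1 v2 : Fin n → ℤ, v1 ≠ v2 ∧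
    Block e ∩ D = {v1, v2} ∧ InterCell v1 v2 e

/-- `g_{n-2}(D)` : the number of `(n-2)`-gaps of `D`. -/
noncomputable def gapCount {n : ℕ} (D : Set (Fin n → ℤ)) : ℕ := {e | IsHub D e}.ncard

/-- `b_j(e, D)` : the number of free `j`-cells of `D` bounded by `e`. -/
noncomputable def bcount {n : ℕ} (e : Fin n → ℤ) (D : Set (Fin n → ℤ)) (j : ℕ) : ℕ :=
  {f | f ∈ FreeCells D j ∧ Bounds e f}.ncard

/-- Two voxels are `i`-adjacent if they are distinct and their intersection
contains an `i`-cell. -/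
def Adj {n : ℕ} (i : ℕ) (v1 v2 : Fin n → ℤ) : Prop :=
  v1 ≠ v2 ∧ ∃ e : Fin n → ℤ, cdim e = i ∧ Bounds e v1 ∧ Bounds e v2

open Finset

section Hamming

variable {ι : Type*} [Fintype ι] {β : ι → Type*} [∀ i, DecidableEq (β i)]

lemma hammingDist_add_hammingDist_eq_iff {x y z : ∀ i, β i} :
    hammingDist x y + hammingDist y z = hammingDist x z ↔ ∀ i, y i = x i ∨ y i = z i := by
  simp only [hammingDist, card_filter, ← sum_add_distrib]
  rw [eq_comm, sum_eq_sum_iff_of_le fun i _ => by grind]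
  simp only [mem_univ, forall_const]
  exact forall_congr' fun i => by grind

end Hamming

section Cells

variable {n i : ℕ} {e v w : Fin n → ℤ}

/-- The coordinate directions normal to the cell `e`, i.e. those in which it is degenerate; their
number is the codimension of `e`. -/
def evenCoords (e : Fin n → ℤ) : Finset (Fin n) := {j | Even (e j)}

@[simp]
lemma mem_evenCoords {j : Fin n} : j ∈ evenCoords e ↔ Even (e j) := by
  simp [evenCoords]

lemma cdim_add_card_evenCoords (e : Fin n → ℤ) : cdim e + #(evenCoords e) = n := by
  simpa [cdim, evenCoords] using
    card_filter_add_card_filter_not (s := (univ : Finset (Fin n))) fun j => Odd (e j)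

lemma IsVoxel.cdim_eq (hv : IsVoxel v) : cdim v = n := by
  simp [cdim, filter_true_of_mem fun j _ => hv j]

lemma bounds_voxel_iff (hv : IsVoxel v) :
    Bounds e v ↔ (evenCoords e).Nonempty ∧ ∀ j, e j = v j ∨ |e j - v j| = 1 := by
  have hdim : cdim e < cdim v ↔ (evenCoords e).Nonempty := by
    have := cdim_add_card_evenCoords e
    rw [hv.cdim_eq, ← card_pos]
    omega
  simp only [Bounds, hdim, hv _, true_and]

lemma Bounds.eq_of_odd (h : Bounds e v) (hv : IsVoxel v) {j : Fin n} (hj : Odd (e j)) :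
    v j = e j := by
  have := hv j
  have := h.2 j
  grind

lemma Bounds.eq_add_one_or_eq_sub_one (h : Bounds e v) (hv : IsVoxel v) {j : Fin n}
    (hj : Even (e j)) : v j = e j + 1 ∨ v j = e j - 1 := by
  have := hv j
  have := h.2 j
  grind

lemma filter_ne_subset_evenCoords (hv : IsVoxel v) (hw : IsVoxel w) (hev : Bounds e v)
    (hew : Bounds e w) : ({j | v j ≠ w j} : Finset (Fin n)) ⊆ evenCoords e := by
  intro j hj
  rw [mem_evenCoords, ← Int.not_odd_iff_even]
  intro hodd
  exact (mem_filter.mp hj).2 ((hev.eq_of_odd hv hodd).trans (hew.eq_of_odd hw hodd).symm)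

lemma hammingDist_le_card_evenCoords (hv : IsVoxel v) (hw : IsVoxel w) (hev : Bounds e v)
    (hew : Bounds e w) : hammingDist v w ≤ #(evenCoords e) :=
  card_le_card (filter_ne_subset_evenCoords hv hw hev hew)

lemma Adj.hammingDist_add_le (h : Adj i v w) (hv : IsVoxel v) (hw : IsVoxel w) :
    hammingDist v w + i ≤ n := by
  obtain ⟨-, f, rfl, hfv, hfw⟩ := h
  have := hammingDist_le_card_evenCoords hv hw hfv hfw
  have := cdim_add_card_evenCoords f
  omega

lemma Adj.hammingDist_eq_one (h : Adj (n - 1) v w) (hv : IsVoxel v) (hw : IsVoxel w) :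
    hammingDist v w = 1 := by
  have := hammingDist_pos.mpr h.1
  have := h.hammingDist_add_le hv hw
  omega

lemma adj_sub_hammingDist (hv : IsVoxel v) (hw : IsVoxel w) (hev : Bounds e v)
    (hew : Bounds e w) (hne : v ≠ w) : Adj (n - hammingDist v w) v w := by
  -- The intersection of `v` and `w`: collapse `v` onto `e` in the directions separating them.
  let f : Fin n → ℤ := fun j => if v j = w j then v j else e j
  have hf : evenCoords f = ({j | v j ≠ w j} : Finset (Fin n)) := by
    ext j
    by_cases hj : v j = w j
    · simpa [f, hj] using hw j
    · have heven : j ∈ evenCoords e :=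
        filter_ne_subset_evenCoords hv hw hev hew (by simpa using hj)
      simpa [f, hj] using heven
  have hf_nonempty : (evenCoords f).Nonempty := by
    rw [hf, ← card_pos]
    exact hammingDist_pos.mpr hne
  refine ⟨hne, f, ?_, (bounds_voxel_iff hv).mpr ⟨hf_nonempty, fun j => ?_⟩,
    (bounds_voxel_iff hw).mpr ⟨hf_nonempty, fun j => ?_⟩⟩
  · have hcard : #(evenCoords f) = hammingDist v w := congrArg card hf
    have := cdim_add_card_evenCoords f
    omega
  · have := ((bounds_voxel_iff hv).mp hev).2 j
    grind
  · have := ((bounds_voxel_iff hw).mp hew).2 j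
    grind

lemma adj_facet_iff_hammingDist_eq_one (hv : IsVoxel v) (hw : IsVoxel w) (hev : Bounds e v)
    (hew : Bounds e w) : Adj (n - 1) v w ↔ hammingDist v w = 1 := by
  refine ⟨fun h => h.hammingDist_eq_one hv hw, fun h => ?_⟩
  have hne : v ≠ w := hammingDist_pos.mp (by omega)
  exact h ▸ adj_sub_hammingDist hv hw hev hew hne

lemma interCell_iff_hammingDist_eq_card (hv : IsVoxel v) (hw : IsVoxel w) (hev : Bounds e v)
    (hew : Bounds e w) : InterCell v w e ↔ hammingDist v w = #(evenCoords e) := by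
  have hsub := filter_ne_subset_evenCoords hv hw hev hew
  have hpointwise : InterCell v w e ↔ evenCoords e ⊆ ({j | v j ≠ w j} : Finset (Fin n)) := by
    refine forall_congr' fun j => ?_
    simp only [mem_evenCoords, mem_filter, mem_univ, true_and]
    rcases Int.even_or_odd (e j) with hj | hj
    · have := hev.eq_add_one_or_eq_sub_one hv hj
      have := hew.eq_add_one_or_eq_sub_one hw hj
      grind
    · have := hev.eq_of_odd hv hj
      have := hew.eq_of_odd hw hj
      grind
  rw [hpointwise]
  exact ⟨fun h => congrArg card (hsub.antisymm h),
    fun h => (eq_of_subset_of_card_le hsub h.ge).ge⟩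

end Cells

section Antipodal

variable {n : ℕ} {e v v1 v2 : Fin n → ℤ}

lemma InterCell.bounds_iff (h : InterCell v1 v2 e) (hv1 : IsVoxel v1) (hv : IsVoxel v)
    (he1 : Bounds e v1) : Bounds e v ↔ ∀ j, v j = v1 j ∨ v j = v2 j := by
  refine ⟨fun hev j => ?_, fun hcoord => (bounds_voxel_iff hv).mpr
    ⟨((bounds_voxel_iff hv1).mp he1).1, fun j => ?_⟩⟩
  · have := h j
    rcases Int.even_or_odd (e j) with hj | hj
    · have := he1.eq_add_one_or_eq_sub_one hv1 hj
      have := hev.eq_add_one_or_eq_sub_one hv hj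
      omega
    · exact Or.inl ((hev.eq_of_odd hv hj).trans (he1.eq_of_odd hv1 hj).symm)
  · have := h j
    have := hcoord j
    grind

lemma InterCell.bounds_iff_hammingDist_add_eq (h : InterCell v1 v2 e) (hv1 : IsVoxel v1)
    (hv : IsVoxel v) (he1 : Bounds e v1) :
    Bounds e v ↔ hammingDist v1 v + hammingDist v v2 = hammingDist v1 v2 :=
  (h.bounds_iff hv1 hv he1).trans hammingDist_add_hammingDist_eq_iff.symm

lemma interCell_iff_ne_and_not_adj_facet (hcodim : #(evenCoords e) = 2) (hv1 : IsVoxel v1)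
    (hv2 : IsVoxel v2) (he1 : Bounds e v1) (he2 : Bounds e v2) :
    InterCell v1 v2 e ↔ v1 ≠ v2 ∧ ¬ Adj (n - 1) v1 v2 := by
  have hle := hammingDist_le_card_evenCoords hv1 hv2 he1 he2
  rw [interCell_iff_hammingDist_eq_card hv1 hv2 he1 he2, ← hammingDist_pos,
    adj_facet_iff_hammingDist_eq_one hv1 hv2 he1 he2]
  omega

lemma InterCell.adj_facet_and_adj_facet_iff (h : InterCell v1 v2 e)
    (hcodim : #(evenCoords e) = 2) (hv1 : IsVoxel v1) (hv2 : IsVoxel v2) (hv : IsVoxel v)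
    (he1 : Bounds e v1) (he2 : Bounds e v2) :
    Adj (n - 1) v1 v ∧ Adj (n - 1) v2 v ↔ Bounds e v ∧ v ≠ v1 ∧ v ≠ v2 := by
  have hopp := (interCell_iff_hammingDist_eq_card hv1 hv2 he1 he2).mp h
  have hbetween := h.bounds_iff_hammingDist_add_eq hv1 hv he1
  rw [hopp, hcodim] at hbetween
  constructor
  · rintro ⟨hadj1, hadj2⟩
    refine ⟨hbetween.mpr ?_, hadj1.1.symm, hadj2.1.symm⟩
    rw [hammingDist_comm v v2, hadj1.hammingDist_eq_one hv1 hv, hadj2.hammingDist_eq_one hv2 hv]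
  · rintro ⟨hev, hne1, hne2⟩
    have hsum := hbetween.mp hev
    have hpos1 := hammingDist_pos.mpr hne1.symm
    have hpos2 := hammingDist_pos.mpr hne2
    rw [adj_facet_iff_hammingDist_eq_one hv1 hv he1 hev,
      adj_facet_iff_hammingDist_eq_one hv2 hv he2 hev, hammingDist_comm v2 v]
    omega

lemma InterCell.block_inter_eq_pair_iff (h : InterCell v1 v2 e) (hcodim : #(evenCoords e) = 2)
    {D : Set (Fin n → ℤ)} (hvox : ∀ v ∈ D, IsVoxel v) (hD1 : v1 ∈ D) (hD2 : v2 ∈ D)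
    (he1 : Bounds e v1) (he2 : Bounds e v2) :
    Block e ∩ D = {v1, v2} ↔ ∀ v ∈ D, ¬ (Adj (n - 1) v1 v ∧ Adj (n - 1) v2 v) := by
  have hpair : {v1, v2} ⊆ Block e ∩ D :=
    Set.pair_subset ⟨⟨hvox v1 hD1, he1⟩, hD1⟩ ⟨⟨hvox v2 hD2, he2⟩, hD2⟩
  rw [← hpair.ge_iff_eq']
  have hcommon := fun v hv =>
    h.adj_facet_and_adj_facet_iff hcodim (hvox v1 hD1) (hvox v2 hD2) (hvox v hv) he1 he2
  refine ⟨fun hsub v hv hadj => ?_, fun hno v hv => ?_⟩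
  · obtain ⟨hev, hne1, hne2⟩ := (hcommon v hv).mp hadj
    exact (hsub ⟨⟨hvox v hv, hev⟩, hv⟩).elim hne1 hne2
  · by_contra hnotin
    obtain ⟨hne1, hne2⟩ := not_or.mp hnotin
    exact hno v hv.2 ((hcommon v hv.2).mpr ⟨hv.1.2, hne1, hne2⟩)

end Antipodal

theorem hub_characterization_general {n : ℕ} (hn : 2 ≤ n) {D : Set (Fin n → ℤ)}
    (hvox : ∀ v ∈ D, IsVoxel v) {e : Fin n → ℤ} (he : cdim e = n - 2) :
    IsHub D e ↔ ∃ v1 ∈ D, ∃ v2 ∈ D,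
      (Bounds e v1 ∧ Bounds e v2) ∧
      (Adj (n - 2) v1 v2 ∧ ¬ Adj (n - 1) v1 v2) ∧
      (∀ v ∈ D, ¬ (Adj (n - 1) v1 v ∧ Adj (n - 1) v2 v)) := by
  have hcodim : #(evenCoords e) = 2 := by
    have := cdim_add_card_evenCoords e
    omega
  constructor
  · rintro ⟨-, v1, v2, hne, hblock, hinter⟩
    obtain ⟨⟨⟨hv1, he1⟩, hD1⟩, ⟨⟨hv2, he2⟩, hD2⟩⟩ := Set.pair_subset_iff.mp hblock.ge
    exact ⟨v1, hD1, v2, hD2, ⟨he1, he2⟩, ⟨⟨hne, e, he, he1, he2⟩,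
      ((interCell_iff_ne_and_not_adj_facet hcodim hv1 hv2 he1 he2).mp hinter).2⟩,
      (hinter.block_inter_eq_pair_iff hcodim hvox hD1 hD2 he1 he2).mp hblock⟩
  · rintro ⟨v1, hD1, v2, hD2, ⟨he1, he2⟩, ⟨⟨hne, -⟩, hnadj⟩, hno⟩
    have hinter : InterCell v1 v2 e :=
      (interCell_iff_ne_and_not_adj_facet hcodim (hvox v1 hD1) (hvox v2 hD2) he1 he2).mpr
        ⟨hne, hnadj⟩
    exact ⟨he, v1, v2, hne,
      (hinter.block_inter_eq_pair_iff hcodim hvox hD1 hD2 he1 he2).mpr hno, hinter⟩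

/-- `D` has an `(n-2)`-gap over an `(n-2)`-cell `e` iff there exist voxels
`v1, v2 ∈ D` bounded by `e` which are `(n-2)`- but not `(n-1)`-adjacent, and no
voxel of `D` is `(n-1)`-adjacent to both. -/
theorem hub_characterization (n : ℕ) (hn : 2 ≤ n) (D : Set (Fin n → ℤ))
    (hfin : D.Finite) (hvox : ∀ v ∈ D, IsVoxel v)
    (e : Fin n → ℤ) (he : cdim e = n - 2) :
    IsHub D e ↔ ∃ v1 ∈ D, ∃ v2 ∈ D,
      (Bounds e v1 ∧ Bounds e v2) ∧
      (Adj (n - 2) v1 v2 ∧ ¬ Adj (n - 1) v1 v2) ∧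
      (∀ v ∈ D, ¬ (Adj (n - 1) v1 v ∧ Adj (n - 1) v2 v)) :=
  hub_characterization_general hn hvox he

end DigitalGeometry
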